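/- Let λ ⊢ n and suppose that the map μ ↦ μ̄ restricts to a bijection from the set {μ ⊢ n : μ ⊵ λ} onto the set {ρ ⊢ n−1 : ρ ⊵ λ̄}. Then the homogeneous linear system has only the zero solution: every function Y assigning a complex number Y(μ) to each partition μ ⊢ n with μ ⊵ λ and satisfying, for every ρ ⊢ n−1 with ρ ⊵ λ̄, the equation Σ_{μ ⊢ n, μ ⊵ λ, μ ≻ ρ} Y(μ) = 0, is identically zero. -/

import Mathlib

/-!
Adding a cell to the first row of `μ̄` gives a diagram that dominates `μ` and has the same image
under the bar map, so injectivity of the bar map forces it to be `μ`. Hence the first row of every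
`μ ⊵ λ` is longer than that of `μ̄`, and in the equation indexed by `μ̄` every unknown other than
`Y μ` belongs to a diagram whose first row is shorter than that of `μ`. The system is therefore
triangular with respect to the length of the first row.
-/


open scoped Classical

noncomputable section

open MvPolynomial

/-- `Dominates μ λ` : μ ⊵ λ in the dominance order (partial row sums of λ are ≤ those of μ). -/
def Dominates (mu lam : YoungDiagram) : Prop :=
  ∀ k : ℕ, ∑ i ∈ Finset.range k, lam.rowLen i ≤ ∑ i ∈ Finset.range k, mu.rowLen i

/-- `Covers λ γ` : γ ≺ λ, i.e. γ is obtained from λ by decreasing exactly one part by 1. -/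
def Covers (lam gam : YoungDiagram) : Prop :=
  ∃ i, gam.rowLen i + 1 = lam.rowLen i ∧ ∀ j, j ≠ i → gam.rowLen j = lam.rowLen j

/-- `IsBar θ ρ`: ρ is obtained from θ by decreasing by 1 the part `θ_i` with the least
index `i` such that `θ_i > θ_{i+1}` (removing a cell from the uppermost possible row). -/
def IsBar (th rho : YoungDiagram) : Prop :=
  ∃ i, (∀ j, j < i → th.rowLen (j + 1) = th.rowLen j) ∧ th.rowLen (i + 1) < th.rowLen i ∧
    rho.rowLen i + 1 = th.rowLen i ∧ ∀ j, j ≠ i → rho.rowLen j = th.rowLen j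

/-- The diagram `θ̄` obtained from `θ` by removing a cell from the uppermost possible row. -/
noncomputable def bar (th : YoungDiagram) : YoungDiagram :=
  if h : ∃ rho, IsBar th rho then h.choose else ⊥

theorem rowLen_eq_zero_iff {mu : YoungDiagram} {i : ℕ} : mu.rowLen i = 0 ↔ mu.colLen 0 ≤ i := by
  rw [← not_lt, ← YoungDiagram.mem_iff_lt_colLen, YoungDiagram.mem_iff_lt_rowLen, not_lt,
    Nat.le_zero]

theorem rowLen_injective : Function.Injective YoungDiagram.rowLen := by
  intro mu nu h
  ext ⟨i, j⟩
  simp only [YoungDiagram.mem_cells, YoungDiagram.mem_iff_lt_rowLen, h]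

theorem exists_rowLen_eq {f : ℕ → ℕ} (hf : Antitone f) {N : ℕ} (hN : f N = 0) :
    ∃ mu : YoungDiagram, mu.rowLen = f := by
  have lt_of_lt {i j : ℕ} (h : j < f i) : i < N := by
    by_contra! hi
    exact (hN ▸ hf hi).not_gt (Nat.zero_lt_of_lt h)
  let mu : YoungDiagram :=
    { cells := {c ∈ Finset.range N ×ˢ Finset.range (f 0) | c.2 < f c.1}
      isLowerSet := by
        rintro ⟨i, j⟩ ⟨i', j'⟩ ⟨hi, hj⟩ h
        simp only [Finset.coe_filter, Finset.mem_product, Finset.mem_range,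
          Set.mem_ofPred_eq] at hi hj h ⊢
        have := hf hi
        omega }
  have mem_mu {i j : ℕ} : (i, j) ∈ mu ↔ j < f i := by
    rw [← YoungDiagram.mem_cells, Finset.mem_filter, Finset.mem_product, Finset.mem_range,
      Finset.mem_range]
    exact ⟨And.right, fun h ↦ ⟨⟨lt_of_lt h, h.trans_le (hf (Nat.zero_le i))⟩, h⟩⟩
  refine ⟨mu, funext fun i ↦ eq_of_forall_lt_iff fun j ↦ ?_⟩
  rw [← YoungDiagram.mem_iff_lt_rowLen, mem_mu]

theorem card_eq_sum_rowLen {mu : YoungDiagram} {N : ℕ} (hN : mu.colLen 0 ≤ N) :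
    mu.card = ∑ i ∈ Finset.range N, mu.rowLen i := by
  have fst_mapsTo : (mu.cells : Set (ℕ × ℕ)).MapsTo Prod.fst (Finset.range N) := by
    rintro ⟨i, j⟩ hc
    have hi : (i, 0) ∈ mu := mu.up_left_mem le_rfl (Nat.zero_le j) hc
    exact Finset.mem_coe.2 (Finset.mem_range.2 ((YoungDiagram.mem_iff_lt_colLen.1 hi).trans_le hN))
  simp only [YoungDiagram.card, Finset.card_eq_sum_card_fiberwise fst_mapsTo,
    YoungDiagram.rowLen_eq_card, YoungDiagram.row]

theorem exists_rowLen_succ_lt {mu : YoungDiagram} (h : 0 < mu.card) :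
    ∃ i, mu.rowLen (i + 1) < mu.rowLen i := by
  by_contra! hmono
  have rowLen_zero : mu.rowLen 0 = 0 :=
    Nat.le_zero.1 <| (monotone_nat_of_le_succ hmono (Nat.zero_le _)).trans_eq
      (rowLen_eq_zero_iff.2 le_rfl)
  rw [card_eq_sum_rowLen (rowLen_eq_zero_iff.1 rowLen_zero), Finset.sum_range_zero] at h
  exact h.false

theorem Dominates.trans {mu nu lam : YoungDiagram} (h : Dominates mu nu) (h' : Dominates nu lam) :
    Dominates mu lam :=
  fun k ↦ (h' k).trans (h k)

/-- `CoversAt i λ γ`: the part `λ_i` is the one that is decreased by 1 in the covering relation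
`γ ≺ λ`, so that `Covers λ γ` unfolds to `∃ i, CoversAt i λ γ`. -/
def CoversAt (i : ℕ) (lam gam : YoungDiagram) : Prop :=
  gam.rowLen i + 1 = lam.rowLen i ∧ ∀ j, j ≠ i → gam.rowLen j = lam.rowLen j

namespace CoversAt

variable {i j : ℕ} {mu nu rho sigma : YoungDiagram}

theorem rowLen_eq (h : CoversAt i mu rho) (k : ℕ) :
    mu.rowLen k = rho.rowLen k + if k = i then 1 else 0 := by
  split_ifs with hk
  · exact hk ▸ h.1.symm
  · exact (h.2 k hk).symm

theorem sum_rowLen_eq (h : CoversAt i mu rho) (k : ℕ) :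
    ∑ t ∈ Finset.range k, mu.rowLen t =
      ∑ t ∈ Finset.range k, rho.rowLen t + if i < k then 1 else 0 := by
  simp only [h.rowLen_eq, Finset.sum_add_distrib, Finset.sum_ite_eq', Finset.mem_range]

theorem left_unique (h : CoversAt i mu rho) (h' : CoversAt i nu rho) : mu = nu :=
  rowLen_injective <| funext fun k ↦ by rw [h.rowLen_eq, h'.rowLen_eq]

theorem right_unique (h : CoversAt i mu rho) (h' : CoversAt i mu sigma) : rho = sigma :=
  rowLen_injective <| funext fun k ↦ by
    rw [← Nat.add_right_cancel_iff, ← h.rowLen_eq, h'.rowLen_eq]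

theorem dominates (h : CoversAt i mu rho) (h' : CoversAt j nu rho) (hij : i ≤ j) :
    Dominates mu nu := by
  intro k
  rw [h.sum_rowLen_eq, h'.sum_rowLen_eq]
  split_ifs <;> omega

theorem card_eq (h : CoversAt i mu rho) : mu.card = rho.card + 1 := by
  let N := max (mu.colLen 0) (rho.colLen 0)
  have lt_N : i < N := by
    refine lt_max_of_lt_left (not_le.1 fun hi ↦ ?_)
    have := rowLen_eq_zero_iff.2 hi
    have := h.1
    omega
  rw [card_eq_sum_rowLen (N := N) (le_max_left _ _), card_eq_sum_rowLen (N := N) (le_max_right _ _),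
    h.sum_rowLen_eq, if_pos lt_N]

end CoversAt

theorem exists_coversAt_of_rowLen_succ_lt {mu : YoungDiagram} {i : ℕ}
    (h : mu.rowLen (i + 1) < mu.rowLen i) : ∃ rho, CoversAt i mu rho := by
  have anti : Antitone (Function.update mu.rowLen i (mu.rowLen i - 1)) := by
    refine antitone_nat_of_succ_le fun j ↦ ?_
    have := mu.rowLen_anti j (j + 1) j.le_succ
    simp only [Function.update_apply]
    grind
  have eventually_zero :
      Function.update mu.rowLen i (mu.rowLen i - 1) (mu.colLen 0) = 0 := by
    have : mu.rowLen (mu.colLen 0) = 0 := rowLen_eq_zero_iff.2 le_rfl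
    simp only [Function.update_apply]
    grind
  obtain ⟨rho, hrho⟩ := exists_rowLen_eq anti eventually_zero
  refine ⟨rho, ?_, fun j hj ↦ ?_⟩
  · rw [hrho, Function.update_self, Nat.sub_add_cancel (Nat.zero_lt_of_lt h)]
  · rw [hrho, Function.update_of_ne hj]

theorem exists_coversAt_zero (rho : YoungDiagram) : ∃ mu, CoversAt 0 mu rho := by
  have anti : Antitone (Function.update rho.rowLen 0 (rho.rowLen 0 + 1)) := by
    refine antitone_nat_of_succ_le fun j ↦ ?_
    have := rho.rowLen_anti j (j + 1) j.le_succ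
    simp only [Function.update_apply]
    grind
  have eventually_zero :
      Function.update rho.rowLen 0 (rho.rowLen 0 + 1) (rho.colLen 0 + 1) = 0 := by
    rw [Function.update_of_ne (Nat.succ_ne_zero _)]
    exact rowLen_eq_zero_iff.2 (Nat.le_succ _)
  obtain ⟨mu, hmu⟩ := exists_rowLen_eq anti eventually_zero
  refine ⟨mu, ?_, fun j hj ↦ ?_⟩
  · rw [hmu, Function.update_self]
  · rw [hmu, Function.update_of_ne hj]

theorem Covers.eq_or_rowLen_zero_lt {mu nu rho : YoungDiagram} (h : Covers nu rho)
    (h' : CoversAt 0 mu rho) : nu = mu ∨ nu.rowLen 0 < mu.rowLen 0 := by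
  obtain ⟨i, hi : CoversAt i nu rho⟩ := h
  obtain rfl | hne := eq_or_ne i 0
  · exact .inl (hi.left_unique h')
  · right
    rw [← hi.2 0 hne.symm, ← h'.1]
    exact Nat.lt_succ_self _

theorem CoversAt.isBar {mu rho : YoungDiagram} (h : CoversAt 0 mu rho) : IsBar mu rho := by
  refine ⟨0, fun j hj ↦ absurd hj (Nat.not_lt_zero j), ?_, h⟩
  rw [← h.2 1 one_ne_zero, ← h.1]
  exact Nat.lt_succ_of_le (rho.rowLen_anti 0 1 zero_le_one)

theorem IsBar.unique {th rho sigma : YoungDiagram} (h : IsBar th rho) (h' : IsBar th sigma) :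
    rho = sigma := by
  obtain ⟨i, eq_below_i, lt_i, hi⟩ := h
  obtain ⟨j, eq_below_j, lt_j, hj⟩ := h'
  obtain rfl : i = j := le_antisymm
    (not_lt.1 fun hji ↦ lt_j.ne (eq_below_i j hji)) (not_lt.1 fun hij ↦ lt_i.ne (eq_below_j i hij))
  exact CoversAt.right_unique hi hj

theorem isBar_bar {th : YoungDiagram} (h : 0 < th.card) : IsBar th (bar th) := by
  have descent := exists_rowLen_succ_lt h
  obtain ⟨rho, hrho⟩ := exists_coversAt_of_rowLen_succ_lt (Nat.find_spec descent)
  have eq_below (j : ℕ) (hj : j < Nat.find descent) : th.rowLen (j + 1) = th.rowLen j :=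
    (th.rowLen_anti j (j + 1) j.le_succ).antisymm (not_lt.1 (Nat.find_min descent hj))
  have exists_isBar : ∃ rho, IsBar th rho := ⟨rho, _, eq_below, Nat.find_spec descent, hrho⟩
  rw [bar, dif_pos exists_isBar]
  exact exists_isBar.choose_spec

theorem IsBar.bar_eq {th rho : YoungDiagram} (h : IsBar th rho) : bar th = rho := by
  have exists_isBar : ∃ rho, IsBar th rho := ⟨rho, h⟩
  rw [bar, dif_pos exists_isBar]
  exact exists_isBar.choose_spec.unique h

theorem Dominates.sum_rowLen_lt {mu lam : YoungDiagram} (h : Dominates mu lam) {i k : ℕ}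
    (hik : i < k) (hmu : mu.rowLen (i + 1) < mu.rowLen i)
    (hlam : ∀ j ≤ k, lam.rowLen j = lam.rowLen 0) :
    ∑ j ∈ Finset.range k, lam.rowLen j < ∑ j ∈ Finset.range k, mu.rowLen j := by
  obtain hk | hk := lt_or_ge (mu.rowLen k) (lam.rowLen k)
  · have := h (k + 1)
    rw [Finset.sum_range_succ, Finset.sum_range_succ] at this
    omega
  · have rowLen_le {j : ℕ} (hj : j ≤ k) : lam.rowLen j ≤ mu.rowLen k := by
      rwa [hlam j hj, ← hlam k le_rfl]
    refine Finset.sum_lt_sum (fun j hj ↦ ?_) ⟨i, Finset.mem_range.2 hik, ?_⟩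
    · have hjk : j ≤ k := (Finset.mem_range.1 hj).le
      exact (rowLen_le hjk).trans (mu.rowLen_anti j k hjk)
    · exact ((rowLen_le hik.le).trans (mu.rowLen_anti (i + 1) k hik)).trans_lt hmu

theorem IsBar.dominates {mu lam rho sigma : YoungDiagram} (hmu : IsBar mu rho)
    (hlam : IsBar lam sigma) (h : Dominates mu lam) : Dominates rho sigma := by
  obtain ⟨i, -, lt_i, hi⟩ := hmu
  obtain ⟨l, eq_below_l, -, hl⟩ := hlam
  have lam_const : ∀ j ≤ l, lam.rowLen j = lam.rowLen 0 := by
    intro j hj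
    induction j with
    | zero => rfl
    | succ j ih => rw [eq_below_l j hj, ih (Nat.le_of_succ_le hj)]
  intro k
  have mu_sum := CoversAt.sum_rowLen_eq hi k
  have lam_sum := CoversAt.sum_rowLen_eq hl k
  -- Only for `i < k ≤ l` does the `k`-th partial sum decrease for `mu` but not for `lam`.
  by_cases hk : i < k ∧ k ≤ l
  · have := h.sum_rowLen_lt hk.1 lt_i fun j hj ↦ lam_const j (hj.trans hk.2)
    grind
  · have := h k
    grind

theorem coversAt_zero_bar_of_injOn {n : ℕ} (hn : 1 ≤ n) {lam mu : YoungDiagram}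
    (hinj : Set.InjOn bar {mu : YoungDiagram | mu.card = n ∧ Dominates mu lam})
    (hcard : mu.card = n) (hdom : Dominates mu lam) : CoversAt 0 mu (bar mu) := by
  obtain ⟨i, -, -, hi : CoversAt i mu (bar mu)⟩ := isBar_bar (hcard ▸ hn : 0 < mu.card)
  obtain ⟨nu, hnu⟩ := exists_coversAt_zero (bar mu)
  have nu_card : nu.card = n := by rw [hnu.card_eq, ← hi.card_eq, hcard]
  have nu_dom : Dominates nu lam := (hnu.dominates hi (Nat.zero_le i)).trans hdom
  rwa [hinj ⟨nu_card, nu_dom⟩ ⟨hcard, hdom⟩ hnu.isBar.bar_eq] at hnu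

theorem system_only_zero_solution_general {M : Type*} [AddCommMonoid M] (n : ℕ) (hn : 1 ≤ n)
    (lam : YoungDiagram) (hlam : lam.card = n)
    (hinj : Set.InjOn bar {mu : YoungDiagram | mu.card = n ∧ Dominates mu lam})
    (Y : YoungDiagram → M)
    (hY : ∀ rho : YoungDiagram, rho.card = n - 1 → Dominates rho (bar lam) →
      ∑ᶠ (mu : YoungDiagram) (_ : mu.card = n ∧ Dominates mu lam ∧ Covers mu rho), Y mu = 0)
    (mu : YoungDiagram) (hcard : mu.card = n) (hdom : Dominates mu lam) : Y mu = 0 := by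
  induction hrow : mu.rowLen 0 using Nat.strong_induction_on generalizing mu with
  | _ r ih =>
    subst hrow
    have hmu := coversAt_zero_bar_of_injOn hn hinj hcard hdom
    have bar_card : (bar mu).card = n - 1 := by rw [← hcard, hmu.card_eq, Nat.add_sub_cancel]
    have bar_dom : Dominates (bar mu) (bar lam) :=
      hmu.isBar.dominates (isBar_bar (hlam ▸ hn)) hdom
    have others_vanish (nu : YoungDiagram) (hne : nu ≠ mu) :
        ∑ᶠ _ : nu.card = n ∧ Dominates nu lam ∧ Covers nu (bar mu), Y nu = 0 := by
      rw [finsum_eq_if, ite_eq_right_iff]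
      rintro ⟨nu_card, nu_dom, nu_covers⟩
      have row_lt := (nu_covers.eq_or_rowLen_zero_lt hmu).resolve_left hne
      exact ih _ row_lt nu nu_card nu_dom rfl
    have equation := hY (bar mu) bar_card bar_dom
    rwa [finsum_eq_single _ mu others_vanish, finsum_eq_if, if_pos ⟨hcard, hdom, 0, hmu⟩]
      at equation

/-- If `μ ↦ μ̄` is a bijection from `{μ ⊢ n : μ ⊵ λ}` onto `{ρ ⊢ n-1 : ρ ⊵ λ̄}`, then the
homogeneous linear system `Σ_{μ ⊵ λ, μ ≻ ρ} Y(μ) = 0` (one equation for each `ρ ⊢ n-1`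
with `ρ ⊵ λ̄`) has only the zero solution. -/
theorem system_only_zero_solution (n : ℕ) (hn : 1 ≤ n) (lam : YoungDiagram)
    (hlam : lam.card = n)
    (hbij : Set.BijOn bar {mu : YoungDiagram | mu.card = n ∧ Dominates mu lam}
      {rho : YoungDiagram | rho.card = n - 1 ∧ Dominates rho (bar lam)})
    (Y : YoungDiagram → ℂ)
    (hY : ∀ rho : YoungDiagram, rho.card = n - 1 → Dominates rho (bar lam) →
      ∑ᶠ (mu : YoungDiagram) (_ : mu.card = n ∧ Dominates mu lam ∧ Covers mu rho), Y mu = 0) :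
    ∀ mu : YoungDiagram, mu.card = n → Dominates mu lam → Y mu = 0 :=
  system_only_zero_solution_general n hn lam hlam hbij.injOn Y hY

end
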